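/- Let m > 0 be a real number and let ψ : EuclideanSpace ℝ (Fin k) → EuclideanSpace ℝ (Fin n) be a smooth map satisfying Δψ(x) = −2m·ψ(x) for all x, with ψ(x₀) ≠ 0 for some point x₀. Define φ : EuclideanSpace ℝ (Fin k) → EuclideanSpace ℝ (Fin n) × ℝ by φ(x) = (ψ(x), 1/√2). Then Δφ(x) = (−2m·ψ(x), 0) for all x, φ satisfies the buckling eigenmap equation Δ²φ(x) = −2m·Δφ(x) for all x, and there is no real number λ such that Δφ(x) = λ·φ(x) for all x. -/

import Mathlib

/-- Componentwise Laplacian of a map `EuclideanSpace ℝ (Fin k) → F` with respect to the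
standard orthonormal coordinates: `Δφ(x) = ∑ i, ∂²φ/∂xᵢ²(x)`. On a product space
`EuclideanSpace ℝ (Fin n) × ℝ` this is the factorwise Laplacian. -/
noncomputable def lap {k : ℕ} {F : Type*} [NormedAddCommGroup F] [NormedSpace ℝ F]
    (φ : EuclideanSpace ℝ (Fin k) → F) (x : EuclideanSpace ℝ (Fin k)) : F :=
  ∑ i : Fin k,
    fderiv ℝ (fun y => fderiv ℝ φ y (EuclideanSpace.single i 1)) x (EuclideanSpace.single i 1)

/-!
On `C²` maps `lap` is Mathlib's Laplacian `Δ`, which acts factorwise. With `a = -2m` and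
`c = 1/√2`, the Laplacian of `φ = (ψ, c)` is `(aψ, 0)`. It differs from `a • φ` by a constant, and
a second Laplacian kills constants, so `Δ²φ = a • Δφ`. If moreover `Δφ = b • φ`, then the constant
coordinate forces `b = 0`, whereas `aψ` does not vanish identically.
-/

open InnerProductSpace Laplacian

section Laplacian

variable {E F G : Type*} [NormedAddCommGroup E] [InnerProductSpace ℝ E] [FiniteDimensional ℝ E]
  [NormedAddCommGroup F] [NormedSpace ℝ F] [NormedAddCommGroup G] [NormedSpace ℝ G]

theorem laplacian_prodMk {f : E → F} {g : E → G} {x : E} (hf : ContDiffAt ℝ 2 f x)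
    (hg : ContDiffAt ℝ 2 g x) : Δ (fun y => (f y, g y)) x = (Δ f x, Δ g x) :=
  have hfg : ContDiffAt ℝ 2 (fun y => (f y, g y)) x := hf.prodMk hg
  Prod.ext (hfg.laplacian_CLM_comp_left (l := .fst ℝ F G)).symm
    (hfg.laplacian_CLM_comp_left (l := .snd ℝ F G)).symm

theorem laplacian_prodMk_const {f : E → F} {x : E} (hf : ContDiffAt ℝ 2 f x) (c : G) :
    Δ (fun y => (f y, c)) x = (Δ f x, 0) := by
  rw [laplacian_prodMk hf contDiffAt_const, laplacian_const, Pi.zero_apply]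

theorem contDiff_laplacian {f : E → F} {n m : WithTop ℕ∞} (hf : ContDiff ℝ n f)
    (hmn : m + 2 ≤ n) : ContDiff ℝ m (Δ f) := by
  rw [laplacian_eq_iteratedFDeriv_stdOrthonormalBasis]
  exact ContDiff.sum fun _ _ =>
    (ContinuousMultilinearMap.apply ℝ (fun _ : Fin 2 => E) F _).contDiff.comp
      (hf.iteratedFDeriv_right hmn)

theorem buckling_eigenmap_example_general {ψ : E → F} (hψ : ContDiff ℝ 2 ψ) {a : ℝ} (ha : a ≠ 0)
    (heigen : ∀ x, Δ ψ x = a • ψ x) {x₀ : E} (hx₀ : ψ x₀ ≠ 0) {c : G} (hc : c ≠ 0) :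
    (∀ x, Δ (fun y => (ψ y, c)) x = (a • ψ x, 0)) ∧
      (∀ x, Δ (Δ (fun y => (ψ y, c))) x = a • Δ (fun y => (ψ y, c)) x) ∧
      ¬∃ b : ℝ, ∀ x, Δ (fun y => (ψ y, c)) x = b • (ψ x, c) := by
  have hlap (x : E) : Δ (fun y => (ψ y, c)) x = (a • ψ x, 0) := by
    rw [laplacian_prodMk_const hψ.contDiffAt, heigen]
  refine ⟨hlap, fun x => ?_, ?_⟩
  · calc Δ (Δ (fun y => (ψ y, c))) x
        = Δ (fun y => (a • ψ y, (0 : G))) x := by rw [funext hlap]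
      _ = (Δ (a • ψ) x, 0) := laplacian_prodMk_const (hψ.const_smul a).contDiffAt 0
      _ = a • (a • ψ x, 0) := by
        rw [laplacian_smul a hψ.contDiffAt, heigen, Prod.smul_mk, smul_zero]
      _ = a • Δ (fun y => (ψ y, c)) x := by rw [hlap]
  · rintro ⟨b, hb⟩
    have hpair : a • ψ x₀ = b • ψ x₀ ∧ 0 = b • c := Prod.mk.inj ((hlap x₀).symm.trans (hb x₀))
    have hb_zero : b = 0 := (smul_eq_zero.mp hpair.2.symm).resolve_right hc
    exact smul_ne_zero ha hx₀ (by rw [hpair.1, hb_zero, zero_smul])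

end Laplacian

section Coordinates

variable {k : ℕ} {F : Type*} [NormedAddCommGroup F] [NormedSpace ℝ F]
  {f : EuclideanSpace ℝ (Fin k) → F}

theorem lap_eq_laplacian_of_contDiffAt {x : EuclideanSpace ℝ (Fin k)} (hf : ContDiffAt ℝ 2 f x) :
    lap f x = Δ f x := by
  have hdf : DifferentiableAt ℝ (fderiv ℝ f) x :=
    (hf.fderiv_right (m := 1) le_rfl).differentiableAt one_ne_zero
  simp [lap, fderiv_clm_apply hdf,
    laplacian_eq_iteratedFDeriv_orthonormalBasis f (EuclideanSpace.basisFun (Fin k) ℝ),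
    iteratedFDeriv_two_apply]

theorem lap_eq_laplacian (hf : ContDiff ℝ 2 f) : lap f = Δ f :=
  funext fun _ => lap_eq_laplacian_of_contDiffAt hf.contDiffAt

theorem lap_lap_eq_laplacian_laplacian (hf : ContDiff ℝ 4 f) : lap (lap f) = Δ (Δ f) := by
  rw [lap_eq_laplacian (hf.of_le (by norm_num)),
    lap_eq_laplacian (contDiff_laplacian hf (by norm_num))]

end Coordinates

theorem buckling_eigenmap_example {k n : ℕ} (m : ℝ) (hm : 0 < m)
    (ψ : EuclideanSpace ℝ (Fin k) → EuclideanSpace ℝ (Fin n))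
    (hψ : ContDiff ℝ (⊤ : ℕ∞) ψ)
    (heigen : ∀ x, lap ψ x = (-(2 * m)) • ψ x)
    (x₀ : EuclideanSpace ℝ (Fin k)) (hx₀ : ψ x₀ ≠ 0) :
    (∀ x, lap (fun y => ((ψ y, 1 / Real.sqrt 2) : EuclideanSpace ℝ (Fin n) × ℝ)) x
        = ((-(2 * m)) • ψ x, 0)) ∧
      (∀ x, lap (lap (fun y => ((ψ y, 1 / Real.sqrt 2) : EuclideanSpace ℝ (Fin n) × ℝ))) x
        = (-(2 * m)) •
            lap (fun y => ((ψ y, 1 / Real.sqrt 2) : EuclideanSpace ℝ (Fin n) × ℝ)) x) ∧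
      ¬∃ lam : ℝ, ∀ x,
        lap (fun y => ((ψ y, 1 / Real.sqrt 2) : EuclideanSpace ℝ (Fin n) × ℝ)) x
          = lam • ((ψ x, 1 / Real.sqrt 2) : EuclideanSpace ℝ (Fin n) × ℝ) := by
  have hφ : ContDiff ℝ (⊤ : ℕ∞) fun y => (ψ y, 1 / Real.sqrt 2) := hψ.prodMk contDiff_const
  have hψ_two : ContDiff ℝ 2 ψ := contDiff_infty.mp hψ 2
  rw [lap_eq_laplacian hψ_two] at heigen
  rw [lap_lap_eq_laplacian_laplacian (contDiff_infty.mp hφ 4),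
    lap_eq_laplacian (contDiff_infty.mp hφ 2)]
  exact buckling_eigenmap_example_general hψ_two (by linarith) heigen hx₀ (by positivity)
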